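/- arXiv:2307.04647 — 4 statements merged into one kernel-verified Lean document; each statement's English description precedes it below -/
import Mathlib

section
/- Let A be a monetary acceptance set and C ⊆ X be stable under scalar addition (C + ℝ = C). If A^∁ ∩ C is convex, then ρ_A is concave on C: for all X, Y ∈ C and λ ∈ [0,1], ρ_A(λX + (1−λ)Y) ≥ λρ_A(X) + (1−λ)ρ_A(Y). -/
open MeasureTheory Set

variable {Ω : Type*} [MeasurableSpace Ω]

/-- `A` is monotone: if `X ∈ A` and `X ≤ Y` almost surely, then `Y ∈ A`. -/
def MonotoneSet (μ : Measure Ω) (A : Set (Ω → ℝ)) : Prop :=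
  ∀ X ∈ A, ∀ Y : Ω → ℝ, (∀ᵐ ω ∂μ, X ω ≤ Y ω) → Y ∈ A

/-- `A` is normalized: `inf {m ∈ ℝ : m ∈ A} = 0`, identifying reals with constants. -/
def NormalizedSet (A : Set (Ω → ℝ)) : Prop :=
  sInf {m : ℝ | (fun _ => m) ∈ A} = 0

/-- A monetary acceptance set: nonempty, monotone and normalized. -/
def MonetaryAcceptance (μ : Measure Ω) (A : Set (Ω → ℝ)) : Prop :=
  A.Nonempty ∧ MonotoneSet μ A ∧ NormalizedSet A

/-- `C` is stable under scalar addition: `C + ℝ = C`. -/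
def StableScalarAdd (C : Set (Ω → ℝ)) : Prop :=
  ∀ X ∈ C, ∀ c : ℝ, (fun ω => X ω + c) ∈ C

/-- The risk measure induced by `A`: `ρ_A(X) = inf {m ∈ ℝ : X + m ∈ A}`
(in `EReal`, so that `inf ∅ = +∞`). -/
noncomputable def rho (A : Set (Ω → ℝ)) (X : Ω → ℝ) : EReal :=
  sInf ((fun m : ℝ => (m : EReal)) '' {m : ℝ | (fun ω => X ω + m) ∈ A})

/-! If `a < ρ_A(X)` and `b < ρ_A(Y)`, then `X + a` and `Y + b` lie in `A^∁`. For `0 < λ < 1`, every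
real `m < λ ρ_A(X) + (1 - λ) ρ_A(Y)` equals `λ a + (1 - λ) b` for such `a` and `b`, so
`λ X + (1 - λ) Y + m` is a convex combination of points of `A^∁ ∩ C` and hence lies in `A^∁`. -/

theorem exists_real_lt_real_lt_add_eq {x y : EReal} {m : ℝ} (h : (m : EReal) < x + y) :
    ∃ a b : ℝ, (a : EReal) < x ∧ (b : EReal) < y ∧ a + b = m := by
  obtain ⟨a, hma, hax⟩ := EReal.lt_iff_exists_real_btwn.1 (EReal.sub_lt_of_lt_add h)
  have hm : (m : EReal) < a + y :=
    (EReal.sub_lt_iff (.inr (EReal.coe_ne_bot m)) (.inr (EReal.coe_ne_top m))).1 hma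
  refine ⟨a, m - a, hax, ?_, add_sub_cancel a m⟩
  rw [EReal.coe_sub]
  exact EReal.sub_lt_of_lt_add' hm

theorem coe_div_lt_of_lt_coe_mul {l a : ℝ} {x : EReal} (hl : 0 < l)
    (h : (a : EReal) < l * x) : ((a / l : ℝ) : EReal) < x := by
  rw [EReal.coe_div, EReal.div_lt_iff (EReal.coe_pos.2 hl) (EReal.coe_ne_top l), mul_comm]
  exact h

theorem exists_real_lt_real_lt_mul_add_mul_eq {k l m : ℝ} {x y : EReal} (hk : 0 < k)
    (hl : 0 < l) (h : (m : EReal) < k * x + l * y) :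
    ∃ a b : ℝ, (a : EReal) < x ∧ (b : EReal) < y ∧ k * a + l * b = m := by
  obtain ⟨a, b, ha, hb, hab⟩ := exists_real_lt_real_lt_add_eq h
  refine ⟨a / k, b / l, coe_div_lt_of_lt_coe_mul hk ha, coe_div_lt_of_lt_coe_mul hl hb, ?_⟩
  rw [mul_div_cancel₀ a hk.ne', mul_div_cancel₀ b hl.ne', hab]

theorem le_rho_iff {Ω : Type*} {A : Set (Ω → ℝ)} {X : Ω → ℝ} {t : EReal} :
    t ≤ rho A X ↔ ∀ m : ℝ, (m : EReal) < t → (fun ω => X ω + m) ∉ A := by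
  simp only [rho, le_sInf_iff, forall_mem_image, mem_ofPred_eq]
  exact forall_congr' fun m => by rw [← not_lt, imp_not_comm]

theorem add_const_notMem_of_lt_rho {Ω : Type*} {A : Set (Ω → ℝ)} {X : Ω → ℝ} {a : ℝ}
    (h : (a : EReal) < rho A X) : (fun ω => X ω + a) ∉ A :=
  le_rho_iff.1 le_rfl a h

theorem rho_concave_on_of_compl_inter_convex_general {Ω : Type*} {A C : Set (Ω → ℝ)}
    (hC : StableScalarAdd C) (hconv : Convex ℝ (Aᶜ ∩ C)) {X Y : Ω → ℝ} (hX : X ∈ C)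
    (hY : Y ∈ C) {l : ℝ} (hl : l ∈ Icc (0 : ℝ) 1) :
    (l : EReal) * rho A X + ((1 - l : ℝ) : EReal) * rho A Y ≤ rho A (l • X + (1 - l) • Y) := by
  rcases hl.1.eq_or_lt with rfl | hl_pos
  · simp
  rcases hl.2.eq_or_lt with rfl | hl_lt_one
  · simp
  refine le_rho_iff.2 fun m hm => ?_
  obtain ⟨a, b, ha, hb, hab⟩ :=
    exists_real_lt_real_lt_mul_add_mul_eq hl_pos (sub_pos.2 hl_lt_one) hm
  have hmem : l • (fun ω => X ω + a) + (1 - l) • (fun ω => Y ω + b) ∈ Aᶜ ∩ C :=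
    hconv ⟨add_const_notMem_of_lt_rho ha, hC X hX a⟩ ⟨add_const_notMem_of_lt_rho hb, hC Y hY b⟩
      hl.1 (sub_nonneg.2 hl.2) (add_sub_cancel l 1)
  have hcomb : (fun ω => (l • X + (1 - l) • Y) ω + m) =
      l • (fun ω => X ω + a) + (1 - l) • (fun ω => Y ω + b) := by
    funext ω
    simp only [Pi.add_apply, Pi.smul_apply, smul_eq_mul, ← hab]
    ring
  rw [hcomb]
  exact hmem.1

/-- If `A` is a monetary acceptance set, `C` is stable under scalar addition and
`A^∁ ∩ C` is convex, then `ρ_A` is concave on `C`. -/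
theorem rho_concave_on_of_compl_inter_convex (μ : Measure Ω) [IsProbabilityMeasure μ]
    (A C : Set (Ω → ℝ)) (hA : MonetaryAcceptance μ A) (hC : StableScalarAdd C)
    (hconv : Convex ℝ (Aᶜ ∩ C)) :
    ∀ X ∈ C, ∀ Y ∈ C, ∀ l ∈ Icc (0 : ℝ) 1,
      (l : EReal) * rho A X + ((1 - l : ℝ) : EReal) * rho A Y ≤ rho A (l • X + (1 - l) • Y) :=
  fun _ hX _ hY _ hl => rho_concave_on_of_compl_inter_convex_general hC hconv hX hY hl
end

section
/- For any random variable X on a probability space, the set C_X := {Y : Y is comonotonic to X} is closed under convergence in probability: if Y_n ∈ C_X for all n and Y_n → Y in probability, then Y ∈ C_X. -/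
open MeasureTheory Set

variable {Ω : Type*} [MeasurableSpace Ω]

/-- `X` and `Y` are comonotonic:
`(X ω - X ω') * (Y ω - Y ω') ≥ 0` for `μ ⊗ μ`-almost every pair `(ω, ω')`. -/
def Comonotonic (μ : Measure Ω) (X Y : Ω → ℝ) : Prop :=
  ∀ᵐ p ∂(μ.prod μ), 0 ≤ (X p.1 - X p.2) * (Y p.1 - Y p.2)

open Filter Topology

theorem Comonotonic.of_tendsto_ae {ι : Type*} [Countable ι] {u : Filter ι} [NeBot u]
    {μ : Measure Ω} [SFinite μ] {X : Ω → ℝ} {Y : ι → Ω → ℝ} {Ylim : Ω → ℝ}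
    (hY : ∀ i, Comonotonic μ X (Y i))
    (hlim : ∀ᵐ ω ∂μ, Tendsto (fun i => Y i ω) u (𝓝 (Ylim ω))) :
    Comonotonic μ X Ylim := by
  have hlim_fst : ∀ᵐ p ∂(μ.prod μ), Tendsto (fun i => Y i p.1) u (𝓝 (Ylim p.1)) :=
    Measure.quasiMeasurePreserving_fst.ae hlim
  have hlim_snd : ∀ᵐ p ∂(μ.prod μ), Tendsto (fun i => Y i p.2) u (𝓝 (Ylim p.2)) :=
    Measure.quasiMeasurePreserving_snd.ae hlim
  have hnonneg : ∀ᵐ p ∂(μ.prod μ), ∀ i, 0 ≤ (X p.1 - X p.2) * (Y i p.1 - Y i p.2) :=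
    ae_all_iff.2 hY
  filter_upwards [hlim_fst, hlim_snd, hnonneg] with p hfst hsnd hp
  exact ge_of_tendsto' ((hfst.sub hsnd).const_mul (X p.1 - X p.2)) hp

theorem comonotonic_set_closed_in_probability_general {ι : Type*} {u : Filter ι} [NeBot u]
    [IsCountablyGenerated u] {μ : Measure Ω} [SFinite μ] {X : Ω → ℝ} {Y : ι → Ω → ℝ}
    {Ylim : Ω → ℝ} (hY : ∀ i, Comonotonic μ X (Y i)) (hlim : TendstoInMeasure μ Y u Ylim) :
    Comonotonic μ X Ylim := by
  obtain ⟨ns, -, hns⟩ := hlim.exists_seq_tendsto_ae'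
  exact .of_tendsto_ae (fun k => hY (ns k)) hns

/-- The set `C_X` of random variables comonotonic to `X` is closed under convergence in
probability: if each `Y n` is comonotonic to `X` and `Y n → Ylim` in probability,
then `Ylim` is comonotonic to `X`. -/
theorem comonotonic_set_closed_in_probability (μ : Measure Ω) [IsProbabilityMeasure μ]
    (X : Ω → ℝ) (Y : ℕ → Ω → ℝ) (Ylim : Ω → ℝ)
    (hmeas : ∀ n, Measurable (Y n)) (hmeaslim : Measurable Ylim)
    (hmem : ∀ n, Y n ∈ {Z : Ω → ℝ | Comonotonic μ X Z})
    (htend : TendstoInMeasure μ Y Filter.atTop Ylim) :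
    Ylim ∈ {Z : Ω → ℝ | Comonotonic μ X Z} :=
  comonotonic_set_closed_in_probability_general hmem htend
end

section
/- If X and Y are comonotonic random variables and neither X nor Y is almost surely constant, then the only almost surely constant element of C_{X,Y} := conv(cone({X} ∪ {Y})) is 0; equivalently, for all α, β > 0 the random variable αX + βY is not almost surely constant. -/
open MeasureTheory Set

variable {Ω : Type*} [MeasurableSpace Ω]

/-!
Being almost surely constant means agreeing on `μ ⊗ μ`-almost every pair of points. On such a
pair, write `x` and `y` for the increments of `X` and `Y`: comonotonicity gives `0 ≤ x * y`, so
if `α * x + β * y` vanishes, multiplying by `x` makes both `α * x ^ 2` and `β * (x * y)` vanish.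
-/

theorem eq_zero_of_mul_add_mul_eq_zero_of_mul_nonneg {R : Type*} [CommRing R] [LinearOrder R]
    [IsStrictOrderedRing R] {a b x y : R} (ha : 0 < a) (hb : 0 ≤ b) (hxy : 0 ≤ x * y)
    (h : a * x + b * y = 0) : x = 0 := by
  have hsum : a * x ^ 2 + b * (x * y) = 0 := by linear_combination x * h
  have hax : a * x ^ 2 = 0 :=
    ((add_eq_zero_iff_of_nonneg (mul_nonneg ha.le (sq_nonneg x)) (mul_nonneg hb hxy)).1 hsum).1
  exact pow_eq_zero_iff two_ne_zero |>.1 ((mul_eq_zero_iff_left ha.ne').1 hax)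

theorem exists_ae_eq_const_iff_ae_prod_eq {E : Type*} [Nonempty E] {μ : Measure Ω} [SFinite μ]
    {f : Ω → E} : (∃ c, ∀ᵐ ω ∂μ, f ω = c) ↔ ∀ᵐ p ∂(μ.prod μ), f p.1 = f p.2 := by
  constructor
  · rintro ⟨c, hc⟩
    filter_upwards [Measure.quasiMeasurePreserving_fst.ae hc,
      Measure.quasiMeasurePreserving_snd.ae hc] with p h₁ h₂
    exact h₁.trans h₂.symm
  · intro h
    obtain rfl | hμ := eq_zero_or_neZero μ
    · simp
    · obtain ⟨ω, hω⟩ := (Measure.ae_ae_of_ae_prod h).exists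
      exact ⟨f ω, hω.mono fun _ ↦ Eq.symm⟩

theorem not_aeConst_smul_add_smul_general {μ : Measure Ω} [SFinite μ] {X Y : Ω → ℝ}
    (hXY : Comonotonic μ X Y) (hX : ¬∃ c : ℝ, ∀ᵐ ω ∂μ, X ω = c) {α β : ℝ} (hα : 0 < α)
    (hβ : 0 ≤ β) : ¬∃ c : ℝ, ∀ᵐ ω ∂μ, (α • X + β • Y) ω = c := by
  rw [exists_ae_eq_const_iff_ae_prod_eq] at hX ⊢
  refine fun hconst ↦ hX ?_
  filter_upwards [hXY, hconst] with p hp heq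
  simp only [Pi.add_apply, Pi.smul_apply, smul_eq_mul] at heq
  have hincr : α * (X p.1 - X p.2) + β * (Y p.1 - Y p.2) = 0 := by linear_combination heq
  exact sub_eq_zero.1 (eq_zero_of_mul_add_mul_eq_zero_of_mul_nonneg hα hβ hp hincr)

/-- If `X` and `Y` are comonotonic and neither is almost surely constant, then for all
`α, β > 0` the random variable `αX + βY` is not almost surely constant (equivalently, the
only almost surely constant element of `conv(cone({X} ∪ {Y}))` is `0`). -/
theorem not_aeConst_smul_add_smul (μ : Measure Ω) [IsProbabilityMeasure μ]
    (X Y : Ω → ℝ) (hXY : Comonotonic μ X Y)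
    (hX : ¬∃ c : ℝ, ∀ᵐ ω ∂μ, X ω = c) (hY : ¬∃ c : ℝ, ∀ᵐ ω ∂μ, Y ω = c) :
    ∀ α β : ℝ, 0 < α → 0 < β → ¬∃ c : ℝ, ∀ᵐ ω ∂μ, (α • X + β • Y) ω = c :=
  fun _ _ hα hβ ↦ not_aeConst_smul_add_smul_general hXY hX hα hβ.le
end

section
/- Let A ⊆ X be a star-shaped set with 0 ∈ A, and let C ⊆ cone(A^∁) be a cone such that both A ∩ C and A^∁ ∩ C are convex. Then the Minkowski gauge D_A is additive on C: D_A(X + Y) = D_A(X) + D_A(Y) for every X, Y ∈ C. -/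
open Set ENNReal

variable {E : Type*} [AddCommGroup E] [Module ℝ E]

/-- `A` is star-shaped (about the origin): `λX ∈ A` for all `X ∈ A` and `λ ∈ [0,1]`. -/
def StarShaped (A : Set E) : Prop :=
  ∀ X ∈ A, ∀ l ∈ Icc (0 : ℝ) 1, l • X ∈ A

/-- The Minkowski gauge (Minkowski deviation) of `A`:
`D_A(X) = inf {m > 0 : m⁻¹ • X ∈ A}`, with `inf ∅ = +∞`. -/
noncomputable def gaugeD (A : Set E) (X : E) : ℝ≥0∞ :=
  ⨅ m : {m : ℝ // 0 < m ∧ m⁻¹ • X ∈ A}, ENNReal.ofReal m.1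

/-- The cogauge of `B`: `W_B(X) = sup {m > 0 : m⁻¹ • X ∈ B}`, with `sup ∅ = 0`. -/
noncomputable def cogaugeD (B : Set E) (X : E) : ℝ≥0∞ :=
  ⨆ m : {m : ℝ // 0 < m ∧ m⁻¹ • X ∈ B}, ENNReal.ofReal m.1

/-- The conic hull of `S`: all nonnegative multiples of elements of `S`. -/
def coneHull (S : Set E) : Set E :=
  {x | ∃ c : ℝ, 0 ≤ c ∧ ∃ s ∈ S, x = c • s}

/-!
For star-shaped `A` the set of `m > 0` with `m⁻¹ • X ∈ A` is an upper set of `(0, ∞)`, so its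
infimum is the supremum of its complement: the gauge of `A` is the cogauge of `Aᶜ`. The gauge of a
convex set is subadditive, and the cogauge of a convex set is superadditive where it does not
vanish. The convex set `A ∩ C` contains `0`, hence is star-shaped, so on the cone `C` the gauge of
`A` is both the gauge of `A ∩ C` and the cogauge of the convex set `Aᶜ ∩ C`.
-/

section

variable {A B C : Set E} {X Y : E}

theorem starShaped_of_convex (hA : Convex ℝ A) (h0 : (0 : E) ∈ A) : StarShaped A :=
  fun _ hX _ hl => hA.smul_mem_of_zero_mem h0 hX hl

theorem exists_inv_smul_mem_of_mem_coneHull (hX : X ∈ coneHull B) (hX0 : X ≠ 0) :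
    ∃ m : ℝ, 0 < m ∧ m⁻¹ • X ∈ B := by
  obtain ⟨c, hc, s, hs, rfl⟩ := hX
  have hc0 : c ≠ 0 := left_ne_zero_of_smul hX0
  exact ⟨c, hc.lt_of_ne' hc0, by rwa [inv_smul_smul₀ hc0]⟩

open scoped Pointwise in
theorem inv_add_smul_add_mem_of_convex (hB : Convex ℝ B) {m n : ℝ} (hm : 0 < m) (hn : 0 < n)
    (hX : m⁻¹ • X ∈ B) (hY : n⁻¹ • Y ∈ B) : (m + n)⁻¹ • (X + Y) ∈ B := by
  rw [← mem_smul_set_iff_inv_smul_mem₀ (by positivity)] at hX hY ⊢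
  rw [hB.add_smul hm.le hn.le]
  exact add_mem_add hX hY

theorem add_mem_of_convex_inter (hBC : Convex ℝ (B ∩ C)) (hC : ∀ x ∈ C, ∀ c : ℝ, 0 < c → c • x ∈ C)
    (hX : ∃ m : ℝ, 0 < m ∧ m⁻¹ • X ∈ B ∩ C) (hY : ∃ m : ℝ, 0 < m ∧ m⁻¹ • Y ∈ B ∩ C) :
    X + Y ∈ C := by
  obtain ⟨m, hm, hmX⟩ := hX
  obtain ⟨n, hn, hnY⟩ := hY
  have hmn : 0 < m + n := add_pos hm hn
  have hsum : (m + n)⁻¹ • (X + Y) ∈ B ∩ C := inv_add_smul_add_mem_of_convex hBC hm hn hmX hnY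
  simpa only [smul_inv_smul₀ hmn.ne'] using hC _ hsum.2 _ hmn

theorem gaugeD_le_ofReal {m : ℝ} (hm : 0 < m) (hX : m⁻¹ • X ∈ A) :
    gaugeD A X ≤ ENNReal.ofReal m :=
  iInf_le (fun m : {m : ℝ // 0 < m ∧ m⁻¹ • X ∈ A} => ENNReal.ofReal m.1) ⟨m, hm, hX⟩

theorem ofReal_le_cogaugeD {m : ℝ} (hm : 0 < m) (hX : m⁻¹ • X ∈ B) :
    ENNReal.ofReal m ≤ cogaugeD B X :=
  le_iSup (fun m : {m : ℝ // 0 < m ∧ m⁻¹ • X ∈ B} => ENNReal.ofReal m.1) ⟨m, hm, hX⟩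

theorem gaugeD_congr (h : ∀ m : ℝ, 0 < m → (m⁻¹ • X ∈ A ↔ m⁻¹ • X ∈ B)) :
    gaugeD A X = gaugeD B X :=
  (Equiv.subtypeEquivRight fun m => and_congr_right (h m)).iInf_congr fun _ => rfl

theorem cogaugeD_congr (h : ∀ m : ℝ, 0 < m → (m⁻¹ • X ∈ A ↔ m⁻¹ • X ∈ B)) :
    cogaugeD A X = cogaugeD B X :=
  (Equiv.subtypeEquivRight fun m => and_congr_right (h m)).iSup_congr fun _ => rfl

theorem gaugeD_le_cogaugeD_compl (A : Set E) (X : E) : gaugeD A X ≤ cogaugeD Aᶜ X := by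
  by_contra! hlt
  obtain ⟨r, -, hr_gt, hr_lt⟩ := ENNReal.lt_iff_exists_real_btwn.1 hlt
  have hr : 0 < r := ENNReal.ofReal_pos.1 (pos_of_gt hr_gt)
  by_cases hrA : r⁻¹ • X ∈ A
  · exact hr_lt.not_ge (gaugeD_le_ofReal hr hrA)
  · exact hr_gt.not_ge (ofReal_le_cogaugeD hr hrA)

theorem StarShaped.inv_smul_mem_of_le (hA : StarShaped A) {m n : ℝ} (hm : 0 < m) (hmn : m ≤ n)
    (hX : m⁻¹ • X ∈ A) : n⁻¹ • X ∈ A := by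
  have hn : 0 < n := hm.trans_le hmn
  have h := hA _ hX (m / n) ⟨by positivity, (div_le_one hn).2 hmn⟩
  rwa [smul_smul, div_mul_eq_mul_div, mul_inv_cancel₀ hm.ne', one_div] at h

theorem StarShaped.gaugeD_eq_cogaugeD_compl (hA : StarShaped A) (X : E) :
    gaugeD A X = cogaugeD Aᶜ X := by
  refine (gaugeD_le_cogaugeD_compl A X).antisymm ?_
  refine iSup_le fun ⟨n, _, hnA⟩ => le_iInf fun ⟨m, hm, hmA⟩ => ?_
  refine ENNReal.ofReal_le_ofReal (le_of_not_gt fun hmn => hnA ?_)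
  exact hA.inv_smul_mem_of_le hm hmn.le hmA

theorem gaugeD_zero (h0 : (0 : E) ∈ A) : gaugeD A 0 = 0 :=
  le_zero_iff.1 ((gaugeD_le_cogaugeD_compl A 0).trans_eq (by simp [cogaugeD, h0]))

theorem gaugeD_add_le (hA : Convex ℝ A) (X Y : E) :
    gaugeD A (X + Y) ≤ gaugeD A X + gaugeD A Y := by
  refine ENNReal.le_iInf_add_iInf fun ⟨m, hm, hmX⟩ ⟨n, hn, hnY⟩ => ?_
  rw [← ENNReal.ofReal_add hm.le hn.le]
  exact gaugeD_le_ofReal (add_pos hm hn) (inv_add_smul_add_mem_of_convex hA hm hn hmX hnY)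

theorem cogaugeD_add_cogaugeD_le (hB : Convex ℝ B) (hX : ∃ m : ℝ, 0 < m ∧ m⁻¹ • X ∈ B)
    (hY : ∃ m : ℝ, 0 < m ∧ m⁻¹ • Y ∈ B) :
    cogaugeD B X + cogaugeD B Y ≤ cogaugeD B (X + Y) := by
  have := nonempty_subtype.2 hX
  have := nonempty_subtype.2 hY
  refine ENNReal.iSup_add_iSup_le fun ⟨m, hm, hmX⟩ ⟨n, hn, hnY⟩ => ?_
  rw [← ENNReal.ofReal_add hm.le hn.le]
  exact ofReal_le_cogaugeD (add_pos hm hn) (inv_add_smul_add_mem_of_convex hB hm hn hmX hnY)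

theorem gaugeD_inter_of_forall_smul_mem (A : Set E) (hX : ∀ c : ℝ, 0 < c → c • X ∈ C) :
    gaugeD (A ∩ C) X = gaugeD A X :=
  gaugeD_congr fun _ hm => and_iff_left (hX _ (inv_pos.2 hm))

theorem StarShaped.gaugeD_eq_cogaugeD_compl_inter (hAC : StarShaped (A ∩ C))
    (hX : ∀ c : ℝ, 0 < c → c • X ∈ C) : gaugeD A X = cogaugeD (Aᶜ ∩ C) X :=
  calc
    gaugeD A X = gaugeD (A ∩ C) X := (gaugeD_inter_of_forall_smul_mem A hX).symm
    _ = cogaugeD (A ∩ C)ᶜ X := hAC.gaugeD_eq_cogaugeD_compl X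
    _ = cogaugeD (Aᶜ ∩ C) X := cogaugeD_congr fun m hm => by
      simp [hX m⁻¹ (inv_pos.2 hm)]

end

theorem gauge_additive_on_cone_general (A C : Set E) (h0 : (0 : E) ∈ A)
    (hCsub : C ⊆ coneHull Aᶜ) (hCcone : ∀ x ∈ C, ∀ c : ℝ, 0 ≤ c → c • x ∈ C)
    (hconv : Convex ℝ (A ∩ C)) (hconv' : Convex ℝ (Aᶜ ∩ C)) :
    ∀ X ∈ C, ∀ Y ∈ C, gaugeD A (X + Y) = gaugeD A X + gaugeD A Y := by
  intro X hX Y hY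
  rcases eq_or_ne X 0 with rfl | hX0
  · simp [gaugeD_zero h0]
  rcases eq_or_ne Y 0 with rfl | hY0
  · simp [gaugeD_zero h0]
  have hray : ∀ Z ∈ C, ∀ c : ℝ, 0 < c → c • Z ∈ C := fun Z hZ c hc => hCcone Z hZ c hc.le
  have hstar : StarShaped (A ∩ C) :=
    starShaped_of_convex hconv ⟨h0, by simpa using hCcone X hX 0 le_rfl⟩
  have hexists : ∀ Z ∈ C, Z ≠ 0 → ∃ m : ℝ, 0 < m ∧ m⁻¹ • Z ∈ Aᶜ ∩ C := by
    intro Z hZ hZ0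
    obtain ⟨m, hm, hmZ⟩ := exists_inv_smul_mem_of_mem_coneHull (hCsub hZ) hZ0
    exact ⟨m, hm, hmZ, hray Z hZ _ (inv_pos.2 hm)⟩
  have hXY : X + Y ∈ C :=
    add_mem_of_convex_inter hconv' hray (hexists X hX hX0) (hexists Y hY hY0)
  have hgauge : ∀ Z ∈ C, gaugeD (A ∩ C) Z = gaugeD A Z := fun Z hZ =>
    gaugeD_inter_of_forall_smul_mem A (hray Z hZ)
  have hcogauge : ∀ Z ∈ C, gaugeD A Z = cogaugeD (Aᶜ ∩ C) Z := fun Z hZ =>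
    hstar.gaugeD_eq_cogaugeD_compl_inter (hray Z hZ)
  apply le_antisymm
  · rw [← hgauge X hX, ← hgauge Y hY, ← hgauge _ hXY]
    exact gaugeD_add_le hconv X Y
  · rw [hcogauge X hX, hcogauge Y hY, hcogauge _ hXY]
    exact cogaugeD_add_cogaugeD_le hconv' (hexists X hX hX0) (hexists Y hY hY0)

/-- If `A` is star-shaped with `0 ∈ A`, and `C ⊆ cone(A^∁)` is a cone such that both
`A ∩ C` and `A^∁ ∩ C` are convex, then the Minkowski gauge `D_A` is additive on `C`. -/
theorem gauge_additive_on_cone (A C : Set E) (hA : StarShaped A) (h0 : (0 : E) ∈ A)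
    (hCsub : C ⊆ coneHull Aᶜ) (hCcone : ∀ x ∈ C, ∀ c : ℝ, 0 ≤ c → c • x ∈ C)
    (hconv : Convex ℝ (A ∩ C)) (hconv' : Convex ℝ (Aᶜ ∩ C)) :
    ∀ X ∈ C, ∀ Y ∈ C, gaugeD A (X + Y) = gaugeD A X + gaugeD A Y :=
  gauge_additive_on_cone_general A C h0 hCsub hCcone hconv hconv'
end
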